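/- The short exact sequence 1 → SU(2) → SU(2) × (SU(2) × SU(2)) → SU(2) × SU(2) → 1 (with the projection onto the last two factors) has exactly three conjugacy classes of splittings, represented by τ(x,y) = (1,x,y), ω₊(x,y) = (x,x,y), and ω₋(x,y) = (y,x,y). -/

import Mathlib

/-- The special unitary group `SU(2)`, as the kernel of the determinant on the
unitary group of `2 × 2` complex matrices. -/
noncomputable def SU2 : Subgroup (Matrix.unitaryGroup (Fin 2) ℂ) :=
  MonoidHom.ker (Matrix.detMonoidHom.comp (Matrix.unitaryGroup (Fin 2) ℂ).subtype)

/-- The projection `SU(2) × (SU(2) × SU(2)) → SU(2) × SU(2)` onto the last two factors. -/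
noncomputable def suProj : (SU2 × SU2 × SU2) →* (SU2 × SU2) :=
  MonoidHom.snd SU2 (SU2 × SU2)

/-- The trivial splitting `τ(x,y) = (1,x,y)`. -/
noncomputable def suTau : (SU2 × SU2) →* (SU2 × SU2 × SU2) :=
  MonoidHom.prod 1 (MonoidHom.id _)

/-- The splitting `ω₊(x,y) = (x,x,y)`. -/
noncomputable def suOmegaPlus : (SU2 × SU2) →* (SU2 × SU2 × SU2) :=
  MonoidHom.prod (MonoidHom.fst _ _) (MonoidHom.id _)

/-- The splitting `ω₋(x,y) = (y,x,y)`. -/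
noncomputable def suOmegaMinus : (SU2 × SU2) →* (SU2 × SU2 × SU2) :=
  MonoidHom.prod (MonoidHom.snd _ _) (MonoidHom.id _)

/-- Two splittings are conjugate iff they differ by conjugation by an element of the
kernel `SU(2)` (embedded as the first factor). -/
def suConj (σ₁ σ₂ : (SU2 × SU2) →* (SU2 × SU2 × SU2)) : Prop :=
  ∃ n : SU2, ∀ q : SU2 × SU2,
    σ₂ q = ((n, 1, 1) : SU2 × SU2 × SU2) * σ₁ q * ((n, 1, 1) : SU2 × SU2 × SU2)⁻¹

/-!
Everything reduces to the fact that an endomorphism `g` of `SU(2)` is trivial or inner, which is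
proved in the group of unit quaternions, where the conjugacy classes are the level sets of the real
part. If `g (-1) = 1`, then `g i` is its own inverse, so `g` is constant on the class of `i`, the
pure unit quaternions; as every unit quaternion is a product of two of these, `g` is trivial. If
`g (-1) = -1`, the identity `re (x y) + re (x y⁻¹) = 2 re x re y`, applied to suitable conjugate `x`
and `y`, shows that the defect `re (g x) - re x` at any point is doubled at some other point; being
bounded, it vanishes. Since `g i` and `g j` satisfy the relations of `i` and `j`, averaging over the
quaternion group yields an inner automorphism that agrees with `g` on `i` and `j`, hence everywhere,
because `x` is determined by the real parts of `x`, `x i`, `x j` and `x i j`.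

The first component of a splitting is a homomorphism `SU(2) × SU(2) → SU(2)`. Its restrictions to
the two factors have commuting images, so they cannot both be surjective: one of them is trivial.
-/

lemma eq_zero_of_forall_exists_mul_norm_le {α E : Type*} [NormedAddGroup E] {D : α → E} {C r : ℝ}
    (hr : 1 < r) (hC : ∀ x, ‖D x‖ ≤ C) (h : ∀ x, ∃ z, r * ‖D x‖ ≤ ‖D z‖) (x : α) : D x = 0 := by
  have : Nonempty α := ⟨x⟩
  have hbdd : BddAbove (Set.range fun x => ‖D x‖) := ⟨C, Set.forall_mem_range.2 hC⟩
  set M := ⨆ x, ‖D x‖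
  have hM : M ≤ M / r := ciSup_le fun x => by
    obtain ⟨z, hz⟩ := h x
    rw [le_div_iff₀' (by linarith)]
    exact hz.trans (le_ciSup hbdd z)
  have hMr : M * r ≤ M := (le_div_iff₀ (by linarith)).1 hM
  have hx : ‖D x‖ ≤ M := le_ciSup hbdd x
  exact norm_le_zero_iff.1 (by nlinarith [norm_nonneg (D x)])

open scoped Quaternion

section Quaternion

variable {R : Type*} [CommRing R]

lemma quaternion_re_mul_comm (a b : ℍ[R]) : (a * b).re = (b * a).re := by
  simp only [Quaternion.re_mul]
  ring

lemma mem_unitary_quaternion_iff {a : ℍ[R]} : a ∈ unitary ℍ[R] ↔ Quaternion.normSq a = 1 := by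
  rw [Unitary.mem_iff, Quaternion.star_mul_self, Quaternion.self_mul_star, and_self,
    ← Quaternion.coe_one, Quaternion.coe_inj]

/-- The quaternion `a + b i + c j + d k`. Unlike the anonymous constructor, whose type is
`ℍ[R,-1,0,-1]`, it is syntactically of type `ℍ[R]`, so that the `simp` lemmas on `ℍ[R]` apply. -/
def quaternionMk (a b c d : R) : ℍ[R] := ⟨a, b, c, d⟩

@[simp] lemma quaternionMk_re (a b c d : R) : (quaternionMk a b c d).re = a := rfl

@[simp] lemma quaternionMk_imI (a b c d : R) : (quaternionMk a b c d).imI = b := rfl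

@[simp] lemma quaternionMk_imJ (a b c d : R) : (quaternionMk a b c d).imJ = c := rfl

@[simp] lemma quaternionMk_imK (a b c d : R) : (quaternionMk a b c d).imK = d := rfl

lemma star_eq_self_of_forall_commute [CharZero R] [NoZeroDivisors R] {x : ℍ[R]}
    (hx : ∀ c, Commute x c) : star x = x := by
  have hi := (hx (quaternionMk 0 1 0 0)).eq
  have hj := (hx (quaternionMk 0 0 1 0)).eq
  simp only [Quaternion.ext_iff, Quaternion.re_mul, Quaternion.imI_mul, Quaternion.imJ_mul,
    Quaternion.imK_mul, quaternionMk_re, quaternionMk_imI, quaternionMk_imJ, quaternionMk_imK,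
    mul_zero, zero_mul, mul_one, one_mul, add_zero, zero_add, sub_zero, zero_sub, sub_self,
    neg_eq_self, self_eq_neg, true_and] at hi hj
  ext <;> simp [hi, hj]

lemma exists_ne_zero_mul_eq_mul_of_re_eq_of_normSq_eq [CharZero R] [NoZeroDivisors R]
    {x y : ℍ[R]} (hre : x.re = y.re) (hnorm : Quaternion.normSq x = Quaternion.normSq y) :
    ∃ n ≠ 0, n * x = y * n := by
  -- `x` and `y` have the same trace `x + star x` and the same norm `star x * x`, both central.
  have intertwines (c : ℍ[R]) : (y * c - c * star x) * x = y * (y * c - c * star x) := by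
    have htrace : y * c * (x + star x) = y * (y + star y) * c := by
      rw [Quaternion.self_add_star', Quaternion.self_add_star', hre, mul_assoc, mul_assoc,
        Quaternion.coe_commutes]
    have hdet : c * (star x * x) = y * star y * c := by
      rw [Quaternion.star_mul_self, Quaternion.self_mul_star, hnorm, Quaternion.coe_commutes]
    calc (y * c - c * star x) * x
        = y * c * (x + star x) - y * c * star x - c * (star x * x) := by noncomm_ring
      _ = y * (y + star y) * c - y * c * star x - y * star y * c := by rw [htrace, hdet]
      _ = y * (y * c - c * star x) := by noncomm_ring
  by_cases! hc : ∃ c, y * c - c * star x ≠ 0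
  · obtain ⟨c, hc⟩ := hc
    exact ⟨_, hc, intertwines c⟩
  · have hy : y = star x := by simpa [sub_eq_zero] using hc 1
    have hreal : star (star x) = star x :=
      star_eq_self_of_forall_commute fun c => sub_eq_zero.1 (hy ▸ hc c)
    exact ⟨1, one_ne_zero, by rw [hy, ← hreal, star_star, one_mul, mul_one]⟩

lemma exists_ne_zero_mul_basis_eq_basis_mul {A : Type*} [Ring A] [Algebra R A]
    (h4 : (4 : A) ≠ 0) (p q : QuaternionAlgebra.Basis A (-1 : R) 0 (-1)) :
    ∃ n : A, n ≠ 0 ∧ n * p.i = q.i * n ∧ n * p.j = q.j * n := by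
  -- `n c` is four times the average of `q(e) * c * p(e)⁻¹` over the elements `e` of the quaternion
  -- group `{±1, ±i, ±j, ±k}`.
  let n (c : A) : A := c - q.i * c * p.i - q.j * c * p.j - q.k * c * p.k
  have hni (c : A) : n c * p.i = q.i * n c := by
    simp only [n, sub_mul, mul_sub, mul_assoc, p.i_mul_i, p.j_mul_i, p.k_mul_i]
    simp only [← mul_assoc, q.i_mul_i, q.i_mul_j, q.i_mul_k, neg_smul, one_smul, zero_smul,
      add_zero, mul_zero, mul_neg, neg_mul, mul_one, one_mul]
    abel
  have hnj (c : A) : n c * p.j = q.j * n c := by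
    simp only [n, sub_mul, mul_sub, mul_assoc, p.i_mul_j, p.j_mul_j, p.k_mul_j]
    simp only [← mul_assoc, q.j_mul_i, q.j_mul_j, q.j_mul_k, neg_smul, one_smul, zero_smul,
      zero_sub, neg_zero, mul_neg, neg_mul, mul_one, one_mul]
    abel
  have hsum : n 1 - n p.i * p.i - n p.j * p.j - n p.k * p.k = 4 := by
    simp only [n, sub_mul, mul_assoc, p.i_mul_i, p.j_mul_i, p.k_mul_i, p.i_mul_j, p.j_mul_j,
      p.k_mul_j, p.i_mul_k, p.j_mul_k, p.k_mul_k, neg_smul, one_smul, zero_smul, add_zero, zero_sub,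
      neg_mul, mul_neg, neg_neg, neg_zero, mul_one, one_mul]
    abel_nf
    norm_num
  by_contra! h
  have hn (c : A) : n c = 0 := by
    by_contra hc
    exact h _ hc (hni c) (hnj c)
  exact h4 (by simpa [hn, eq_comm] using hsum)

end Quaternion

/-- The multiplicative group of real quaternions of norm one. -/
abbrev UnitQuaternion : Type := unitary ℍ[ℝ]

namespace UnitQuaternion

/-- The unit quaternion `a + b i + c j + d k`. -/
def mk (a b c d : ℝ) (h : a ^ 2 + b ^ 2 + c ^ 2 + d ^ 2 = 1) : UnitQuaternion :=
  ⟨quaternionMk a b c d, mem_unitary_quaternion_iff.2 (by simpa [Quaternion.normSq_def'] using h)⟩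

@[simp] lemma coe_mk (a b c d : ℝ) (h : a ^ 2 + b ^ 2 + c ^ 2 + d ^ 2 = 1) :
    (mk a b c d h : ℍ[ℝ]) = quaternionMk a b c d := rfl

@[simp] lemma coe_neg (x : UnitQuaternion) : ((-x : UnitQuaternion) : ℍ[ℝ]) = -x := rfl

@[simp] lemma coe_inv (x : UnitQuaternion) : ((x⁻¹ : UnitQuaternion) : ℍ[ℝ]) = star (x : ℍ[ℝ]) :=
  rfl

/-- The imaginary unit `i` as a unit quaternion. -/
def i : UnitQuaternion := mk 0 1 0 0 (by norm_num)

/-- The imaginary unit `j` as a unit quaternion. -/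
def j : UnitQuaternion := mk 0 0 1 0 (by norm_num)

lemma i_mul_i : i * i = -1 := by
  ext <;> simp [i]

lemma j_mul_j : j * j = -1 := by
  ext <;> simp [j]

lemma j_mul_i : j * i = -(i * j) := by
  ext <;> simp [i, j]

lemma normSq_eq_one (x : UnitQuaternion) : Quaternion.normSq (x : ℍ[ℝ]) = 1 :=
  mem_unitary_quaternion_iff.1 x.2

lemma abs_re_le_one (x : UnitQuaternion) : |(x : ℍ[ℝ]).re| ≤ 1 := by
  have hx := normSq_eq_one x
  rw [Quaternion.normSq_def'] at hx
  rw [← sq_le_one_iff_abs_le_one]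
  nlinarith [sq_nonneg (x : ℍ[ℝ]).imI, sq_nonneg (x : ℍ[ℝ]).imJ, sq_nonneg (x : ℍ[ℝ]).imK]

lemma exists_forall_conj_eq_of_ne_zero {n : ℍ[ℝ]} (hn : n ≠ 0) :
    ∃ m : UnitQuaternion, ∀ x y : UnitQuaternion, n * x = y * n → m * x * m⁻¹ = y := by
  have hmem : ‖n‖⁻¹ • n ∈ unitary ℍ[ℝ] := by
    rw [mem_unitary_quaternion_iff, Quaternion.normSq_smul, Quaternion.normSq_eq_norm_mul_self]
    field_simp [norm_ne_zero_iff.2 hn]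
  refine ⟨⟨_, hmem⟩, fun x y h => mul_inv_eq_iff_eq_mul.2 (Subtype.ext ?_)⟩
  simp [h]

lemma isConj_iff_re_eq {x y : UnitQuaternion} : IsConj x y ↔ (x : ℍ[ℝ]).re = (y : ℍ[ℝ]).re := by
  rw [isConj_iff]
  constructor
  · rintro ⟨n, rfl⟩
    rw [Submonoid.coe_mul, quaternion_re_mul_comm, ← Submonoid.coe_mul,
      inv_mul_cancel_left]
  · intro h
    obtain ⟨n, hn, hxy⟩ := exists_ne_zero_mul_eq_mul_of_re_eq_of_normSq_eq h
      ((normSq_eq_one x).trans (normSq_eq_one y).symm)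
    obtain ⟨m, hm⟩ := exists_forall_conj_eq_of_ne_zero hn
    exact ⟨m, hm x y hxy⟩

lemma re_mul_add_re_mul_inv (x y : UnitQuaternion) :
    ((x * y : UnitQuaternion) : ℍ[ℝ]).re + ((x * y⁻¹ : UnitQuaternion) : ℍ[ℝ]).re =
      2 * (x : ℍ[ℝ]).re * (y : ℍ[ℝ]).re := by
  simp only [Submonoid.coe_mul, coe_inv, Quaternion.re_mul, Quaternion.re_star,
    Quaternion.imI_star, Quaternion.imJ_star, Quaternion.imK_star]
  ring

lemma eq_of_re_mul_eq {x y : UnitQuaternion} (h1 : (x : ℍ[ℝ]).re = (y : ℍ[ℝ]).re)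
    (hi : ((x * i : UnitQuaternion) : ℍ[ℝ]).re = ((y * i : UnitQuaternion) : ℍ[ℝ]).re)
    (hj : ((x * j : UnitQuaternion) : ℍ[ℝ]).re = ((y * j : UnitQuaternion) : ℍ[ℝ]).re)
    (hk : ((x * (i * j) : UnitQuaternion) : ℍ[ℝ]).re =
      ((y * (i * j) : UnitQuaternion) : ℍ[ℝ]).re) : x = y := by
  ext
  · exact h1
  · simpa [i] using hi
  · simpa [j] using hj
  · simpa [i, j] using hk

lemma eq_one_or_eq_neg_one_of_mul_self {x : UnitQuaternion} (h : x * x = 1) : x = 1 ∨ x = -1 := by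
  have hx : (x : ℍ[ℝ]) * x = 1 := congrArg Subtype.val h
  exact (mul_self_eq_one_iff.1 hx).imp Subtype.ext Subtype.ext

lemma eq_of_isConj_of_mul_self_eq_one {x y : UnitQuaternion} (h : IsConj x y) (hx : x * x = 1) :
    x = y := by
  obtain ⟨n, rfl⟩ := isConj_iff.1 h
  obtain rfl | rfl := eq_one_or_eq_neg_one_of_mul_self hx <;> simp

lemma exists_eq_mul_of_re_eq_zero (x : UnitQuaternion) :
    ∃ u v : UnitQuaternion, (u : ℍ[ℝ]).re = 0 ∧ (v : ℍ[ℝ]).re = 0 ∧ x = u * v := by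
  have hx : (x : ℍ[ℝ]).re ^ 2 ≤ 1 := (sq_le_one_iff_abs_le_one _).2 (abs_re_le_one x)
  let u := mk 0 0 (x : ℍ[ℝ]).re √(1 - (x : ℍ[ℝ]).re ^ 2) (by
    rw [Real.sq_sqrt (by linarith)]
    ring)
  have huv : IsConj (u * j⁻¹) x := isConj_iff_re_eq.2 (by simp [u, j])
  obtain ⟨n, hn⟩ := isConj_iff.1 huv
  refine ⟨n * u * n⁻¹, n * j⁻¹ * n⁻¹, ?_, ?_, ?_⟩
  · rw [← isConj_iff_re_eq.1 (isConj_iff.2 ⟨n, rfl⟩)]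
    simp [u]
  · rw [← isConj_iff_re_eq.1 (isConj_iff.2 ⟨n, rfl⟩)]
    simp [j]
  · rw [← hn]
    group

lemma map_eq_one_of_map_neg_one_eq_one {g : UnitQuaternion →* UnitQuaternion} (hg : g (-1) = 1) :
    g = 1 := by
  have hii : g i * g i = 1 := by rw [← map_mul, i_mul_i, hg]
  have hpure (u : UnitQuaternion) (hu : (u : ℍ[ℝ]).re = 0) : g u = g i :=
    (eq_of_isConj_of_mul_self_eq_one
      (g.map_isConj (isConj_iff_re_eq.2 (by simp [i, hu]))) hii).symm
  ext1 x
  obtain ⟨u, v, hu, hv, rfl⟩ := exists_eq_mul_of_re_eq_zero x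
  rw [map_mul, hpure u hu, hpure v hv, hii, MonoidHom.one_apply]

lemma exists_forall_two_mul_re_map_eq {x : UnitQuaternion} (hx : 0 ≤ (x : ℍ[ℝ]).re) :
    ∃ z : UnitQuaternion, ∀ g : UnitQuaternion →* UnitQuaternion,
      2 * (g x : ℍ[ℝ]).re = (g z : ℍ[ℝ]).re + 1 := by
  set u := (x : ℍ[ℝ]).re
  have hu : u ≤ 1 := (le_abs_self u).trans (abs_re_le_one x)
  have hsqrt : √u ^ 2 + √(1 - u) ^ 2 = 1 := by
    rw [Real.sq_sqrt hx, Real.sq_sqrt (by linarith)]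
    ring
  let a := mk √u √(1 - u) 0 0 (by simpa using hsqrt)
  let b := mk √u 0 √(1 - u) 0 (by simpa using hsqrt)
  have hconj : IsConj b a := isConj_iff_re_eq.2 (by simp [a, b])
  have hmul : IsConj (a * b) x := isConj_iff_re_eq.2 (by simp [a, b, u, hx])
  have hmulInv : IsConj (a * b⁻¹) x := isConj_iff_re_eq.2 (by simp [a, b, u, hx])
  -- As `a` and `b` are conjugate, the identity for `re (x y) + re (x y⁻¹)` gives the same value on
  -- `(g a, g b)` as on `(g a, g a)`.
  refine ⟨a * a, fun g => ?_⟩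
  have hre {y z : UnitQuaternion} (h : IsConj y z) : (g y : ℍ[ℝ]).re = (g z : ℍ[ℝ]).re :=
    isConj_iff_re_eq.1 (g.map_isConj h)
  calc 2 * (g x : ℍ[ℝ]).re
      = (g (a * b) : ℍ[ℝ]).re + (g (a * b⁻¹) : ℍ[ℝ]).re := by rw [hre hmul, hre hmulInv, two_mul]
    _ = 2 * (g a : ℍ[ℝ]).re * (g a : ℍ[ℝ]).re := by
        rw [map_mul, map_mul, map_inv, re_mul_add_re_mul_inv, hre hconj]
    _ = (g (a * a) : ℍ[ℝ]).re + (g (a * a⁻¹) : ℍ[ℝ]).re := by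
        rw [map_mul, map_mul, map_inv, re_mul_add_re_mul_inv]
    _ = (g (a * a) : ℍ[ℝ]).re + 1 := by simp

lemma re_map_eq_of_map_neg_one {g : UnitQuaternion →* UnitQuaternion} (hg : g (-1) = -1)
    (x : UnitQuaternion) : (g x : ℍ[ℝ]).re = (x : ℍ[ℝ]).re := by
  have hneg (y : UnitQuaternion) : g (-y) = -g y := by rw [← neg_one_mul, map_mul, hg, neg_one_mul]
  let D (y : UnitQuaternion) : ℝ := (g y : ℍ[ℝ]).re - (y : ℍ[ℝ]).re
  have hDneg (y : UnitQuaternion) : D (-y) = -D y := by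
    simp only [D, hneg, coe_neg, Quaternion.re_neg]
    ring
  have hbound (y : UnitQuaternion) : ‖D y‖ ≤ 2 :=
    (abs_sub _ _).trans (by linarith [abs_re_le_one (g y), abs_re_le_one y])
  have hdouble_of_nonneg (y : UnitQuaternion) (hy : 0 ≤ (y : ℍ[ℝ]).re) : ∃ z, 2 * D y = D z := by
    obtain ⟨z, hz⟩ := exists_forall_two_mul_re_map_eq hy
    refine ⟨z, ?_⟩
    have hid := hz (MonoidHom.id _)
    simp only [MonoidHom.id_apply] at hid
    linear_combination hz g - hid
  have hdouble (y : UnitQuaternion) : ∃ z, 2 * ‖D y‖ ≤ ‖D z‖ := by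
    obtain hy | hy := le_total 0 (y : ℍ[ℝ]).re
    · obtain ⟨z, hz⟩ := hdouble_of_nonneg y hy
      exact ⟨z, by rw [← hz, norm_mul, Real.norm_two]⟩
    · obtain ⟨z, hz⟩ := hdouble_of_nonneg (-y) (by simpa using hy)
      exact ⟨z, by rw [← hz, hDneg, norm_mul, norm_neg, Real.norm_two]⟩
  exact sub_eq_zero.1 (eq_zero_of_forall_exists_mul_norm_le one_lt_two hbound hdouble x)

/-- The quaternion units `g i`, `g j`, `g i * g j` obtained from an endomorphism `g` of the group of
unit quaternions that is odd, that is, with `g (-1) = -1`. -/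
noncomputable def mapBasis (g : UnitQuaternion →* UnitQuaternion) (hg : g (-1) = -1) :
    QuaternionAlgebra.Basis ℍ[ℝ] (-1 : ℝ) 0 (-1) where
  i := g i
  j := g j
  k := g i * g j
  i_mul_i := by
    rw [← Submonoid.coe_mul, ← map_mul, i_mul_i, hg]
    simp
  j_mul_j := by
    rw [← Submonoid.coe_mul, ← map_mul, j_mul_j, hg]
    simp
  i_mul_j := rfl
  j_mul_i := by
    rw [← Submonoid.coe_mul, ← map_mul, j_mul_i, ← neg_one_mul, map_mul, hg, map_mul]
    simp

lemma exists_conj_i_j_eq_map {g : UnitQuaternion →* UnitQuaternion} (hg : g (-1) = -1) :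
    ∃ n : UnitQuaternion, n * i * n⁻¹ = g i ∧ n * j * n⁻¹ = g j := by
  have h4 : (4 : ℍ[ℝ]) ≠ 0 := fun h => four_ne_zero (congrArg (·.re) h : (4 : ℝ) = 0)
  obtain ⟨n, hn, hi, hj⟩ :=
    exists_ne_zero_mul_basis_eq_basis_mul h4 (mapBasis (MonoidHom.id _) rfl)
      (mapBasis g hg)
  obtain ⟨m, hm⟩ := exists_forall_conj_eq_of_ne_zero hn
  exact ⟨m, hm i (g i) hi, hm j (g j) hj⟩

lemma eq_id_of_re_map_eq_of_map_i_of_map_j {g : UnitQuaternion →* UnitQuaternion}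
    (hre : ∀ x, (g x : ℍ[ℝ]).re = (x : ℍ[ℝ]).re) (hi : g i = i) (hj : g j = j) :
    g = MonoidHom.id UnitQuaternion := by
  ext1 x
  have hfix (y : UnitQuaternion) (hy : g y = y) :
      ((g x * y : UnitQuaternion) : ℍ[ℝ]).re = ((x * y : UnitQuaternion) : ℍ[ℝ]).re := by
    rw [← hre (x * y), map_mul, hy]
  exact eq_of_re_mul_eq (hre x) (hfix i hi) (hfix j hj) (hfix (i * j) (by rw [map_mul, hi, hj]))

theorem eq_one_or_exists_eq_conj (g : UnitQuaternion →* UnitQuaternion) :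
    g = 1 ∨ ∃ n, g = (MulAut.conj n).toMonoidHom := by
  have hsq : g (-1) * g (-1) = 1 := by rw [← map_mul, neg_mul_neg, one_mul, map_one]
  obtain hg | hg := eq_one_or_eq_neg_one_of_mul_self hsq
  · exact .inl (map_eq_one_of_map_neg_one_eq_one hg)
  · obtain ⟨n, hi, hj⟩ := exists_conj_i_j_eq_map hg
    have hid : (MulAut.conj n⁻¹).toMonoidHom.comp g = MonoidHom.id UnitQuaternion := by
      refine eq_id_of_re_map_eq_of_map_i_of_map_j (fun x => ?_) ?_ ?_
      · rw [← re_map_eq_of_map_neg_one hg x]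
        exact (isConj_iff_re_eq.1 (isConj_iff.2 ⟨n⁻¹, rfl⟩)).symm
      · simp [← hi, mul_assoc]
      · simp [← hj, mul_assoc]
    refine .inr ⟨n, MonoidHom.ext fun x => ?_⟩
    have hx : n⁻¹ * g x * n⁻¹⁻¹ = x := DFunLike.congr_fun hid x
    simpa [eq_inv_mul_iff_mul_eq, ← mul_assoc] using congrArg (MulAut.conj n) hx

lemma not_commute_i_j : ¬Commute i j := fun h => by
  have hk := congrArg (fun x : UnitQuaternion => (x : ℍ[ℝ]).imK) h.eq
  norm_num [i, j] at hk

end UnitQuaternion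

section TrivialOrInner

variable {G H : Type*} [Group G] [Group H]

/-- The property of a group that its endomorphisms are exactly the obvious ones: the trivial one and
the inner automorphisms. -/
def HasOnlyTrivialOrInnerEnd (G : Type*) [Group G] : Prop :=
  ∀ f : G →* G, f = 1 ∨ ∃ n, f = (MulAut.conj n).toMonoidHom

lemma HasOnlyTrivialOrInnerEnd.of_mulEquiv (e : G ≃* H) (hG : HasOnlyTrivialOrInnerEnd G) :
    HasOnlyTrivialOrInnerEnd H := fun f => by
  have hf (y : H) : f y = e ((e.symm.toMonoidHom.comp (f.comp e.toMonoidHom)) (e.symm y)) := by simp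
  refine (hG (e.symm.toMonoidHom.comp (f.comp e.toMonoidHom))).imp (fun h => ?_) ?_
  · ext y
    rw [hf, h]
    simp
  · rintro ⟨n, h⟩
    refine ⟨e n, MonoidHom.ext fun y => ?_⟩
    rw [hf, h]
    simp

theorem HasOnlyTrivialOrInnerEnd.prod_eq_one_or_eq_conj_comp_fst_or_snd
    (hG : HasOnlyTrivialOrInnerEnd G) (hcomm : ∃ a b : G, ¬Commute a b) (f : G × G →* G) :
    f = 1 ∨ (∃ n, f = (MulAut.conj n).toMonoidHom.comp (MonoidHom.fst G G)) ∨
      ∃ n, f = (MulAut.conj n).toMonoidHom.comp (MonoidHom.snd G G) := by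
  have hf (a b : G) : f (a, b) = f.comp (.inl G G) a * f.comp (.inr G G) b := by
    simp [← map_mul]
  obtain hl | ⟨n, hl⟩ := hG (f.comp (.inl G G)) <;> obtain hr | ⟨m, hr⟩ := hG (f.comp (.inr G G))
  · refine .inl (MonoidHom.ext fun x => ?_)
    simp [hf x.1 x.2, hl, hr]
  · refine .inr (.inr ⟨m, MonoidHom.ext fun x => ?_⟩)
    simp [hf x.1 x.2, hl, hr]
  · refine .inr (.inl ⟨n, MonoidHom.ext fun x => ?_⟩)
    simp [hf x.1 x.2, hl, hr]
  · obtain ⟨a, b, hab⟩ := hcomm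
    obtain ⟨a, rfl⟩ := (MulAut.conj n).surjective a
    obtain ⟨b, rfl⟩ := (MulAut.conj m).surjective b
    have himage : Commute (f.comp (.inl G G) a) (f.comp (.inr G G) b) :=
      (MonoidHom.commute_inl_inr a b).map f
    rw [hl, hr] at himage
    exact absurd himage hab

end TrivialOrInner

lemma star_eq_adjugate_of_mem_unitaryGroup_of_det_eq_one {n R : Type*} [Fintype n] [DecidableEq n]
    [CommRing R] [StarRing R] {A : Matrix n n R} (hA : A ∈ Matrix.unitaryGroup n R)
    (hdet : A.det = 1) : star A = A.adjugate :=
  left_inv_eq_right_inv (Matrix.mem_unitaryGroup_iff'.1 hA) (by rw [A.mul_adjugate, hdet, one_smul])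

/-- The standard representation of the quaternions by complex `2 × 2` matrices, sending
`a + b i + c j + d k` to `!![a + b i, c + d i; -c + d i, a - b i]`. -/
def quaternionToMatrix : ℍ[ℝ] →⋆* Matrix (Fin 2) (Fin 2) ℂ where
  toFun q := !![⟨q.re, q.imI⟩, ⟨q.imJ, q.imK⟩; ⟨-q.imJ, q.imK⟩, ⟨q.re, -q.imI⟩]
  map_one' := by
    ext a b
    fin_cases a <;> fin_cases b <;> simp [Complex.ext_iff]
  map_mul' p q := by
    ext a b
    fin_cases a <;> fin_cases b <;> apply Complex.ext <;> simp [Matrix.mul_apply] <;> ring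
  map_star' q := by
    ext a b
    fin_cases a <;> fin_cases b <;> simp [Complex.ext_iff]

lemma quaternionToMatrix_apply (q : ℍ[ℝ]) : quaternionToMatrix q =
    !![⟨q.re, q.imI⟩, ⟨q.imJ, q.imK⟩; ⟨-q.imJ, q.imK⟩, ⟨q.re, -q.imI⟩] := rfl

lemma det_quaternionToMatrix (q : ℍ[ℝ]) :
    (quaternionToMatrix q).det = (Quaternion.normSq q : ℝ) := by
  rw [quaternionToMatrix_apply, Matrix.det_fin_two_of, Quaternion.normSq_def']
  apply Complex.ext <;> simp [pow_two] <;> ring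

lemma quaternionToMatrix_injective : Function.Injective quaternionToMatrix := fun p q h => by
  have h0 : (⟨p.re, p.imI⟩ : ℂ) = ⟨q.re, q.imI⟩ := congrFun₂ h 0 0
  have h1 : (⟨p.imJ, p.imK⟩ : ℂ) = ⟨q.imJ, q.imK⟩ := congrFun₂ h 0 1
  rw [Complex.mk.injEq] at h0 h1
  exact QuaternionAlgebra.ext h0.1 h0.2 h1.1 h1.2

lemma exists_quaternionToMatrix_eq_of_star_eq_adjugate {A : Matrix (Fin 2) (Fin 2) ℂ}
    (hA : star A = A.adjugate) : ∃ q, quaternionToMatrix q = A := by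
  have h11 : star (A 0 0) = A 1 1 := by
    simpa [Matrix.adjugate_fin_two] using congrFun₂ hA 0 0
  have h10 : star (A 0 1) = -A 1 0 := by
    simpa [Matrix.adjugate_fin_two] using congrFun₂ hA 1 0
  refine ⟨quaternionMk (A 0 0).re (A 0 0).im (A 0 1).re (A 0 1).im, ?_⟩
  rw [quaternionToMatrix_apply, A.eta_fin_two, ← h11, ← neg_eq_iff_eq_neg.2 h10]
  simp [Complex.ext_iff]

lemma mem_SU2_iff {A : Matrix.unitaryGroup (Fin 2) ℂ} :
    A ∈ SU2 ↔ (A : Matrix (Fin 2) (Fin 2) ℂ).det = 1 := Iff.rfl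

lemma unitaryMap_quaternionToMatrix_mem_SU2 (x : UnitQuaternion) :
    Unitary.map quaternionToMatrix x ∈ SU2 := by
  rw [mem_SU2_iff, Unitary.coe_map, det_quaternionToMatrix, x.normSq_eq_one, Complex.ofReal_one]

/-- The homomorphism from the unit quaternions to `SU(2)` induced by `quaternionToMatrix`. -/
noncomputable def UnitQuaternion.toSU2 : UnitQuaternion →* SU2 :=
  (Unitary.map quaternionToMatrix).toMonoidHom.codRestrict SU2 unitaryMap_quaternionToMatrix_mem_SU2

lemma UnitQuaternion.toSU2_bijective : Function.Bijective toSU2 := by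
  constructor
  · intro x y h
    exact Unitary.map_injective quaternionToMatrix_injective (congrArg Subtype.val h)
  · rintro ⟨A, hA⟩
    obtain ⟨q, hq⟩ := exists_quaternionToMatrix_eq_of_star_eq_adjugate
      (star_eq_adjugate_of_mem_unitaryGroup_of_det_eq_one A.2 hA)
    have hnorm : Quaternion.normSq q = 1 := by
      rw [← Complex.ofReal_inj, ← det_quaternionToMatrix, hq, mem_SU2_iff.1 hA, Complex.ofReal_one]
    exact ⟨⟨q, mem_unitary_quaternion_iff.2 hnorm⟩, Subtype.ext (Subtype.ext hq)⟩

/-- The isomorphism between the group of unit quaternions and `SU(2)`. -/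
noncomputable def UnitQuaternion.equivSU2 : UnitQuaternion ≃* SU2 :=
  MulEquiv.ofBijective toSU2 toSU2_bijective

lemma hasOnlyTrivialOrInnerEnd_SU2 : HasOnlyTrivialOrInnerEnd SU2 :=
  .of_mulEquiv UnitQuaternion.equivSU2 UnitQuaternion.eq_one_or_exists_eq_conj

lemma exists_not_commute_SU2 : ∃ a b : SU2, ¬Commute a b :=
  ⟨_, _, fun h => UnitQuaternion.not_commute_i_j (h.of_map UnitQuaternion.equivSU2.injective)⟩

lemma suConj_prod_id_iff {f g : SU2 × SU2 →* SU2} :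
    suConj (f.prod (.id _)) (g.prod (.id _)) ↔ ∃ n, g = (MulAut.conj n).toMonoidHom.comp f := by
  simp [suConj, MonoidHom.ext_iff]

theorem su2_sequence_has_three_conjugacy_classes_of_splittings_general :
    (∀ q, suProj (suTau q) = q) ∧
    (∀ q, suProj (suOmegaPlus q) = q) ∧
    (∀ q, suProj (suOmegaMinus q) = q) ∧
    ¬ suConj suTau suOmegaPlus ∧ ¬ suConj suTau suOmegaMinus ∧
    ¬ suConj suOmegaPlus suOmegaMinus ∧
    (∀ σ : (SU2 × SU2) →* (SU2 × SU2 × SU2), (∀ q, suProj (σ q) = q) →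
      suConj suTau σ ∨ suConj suOmegaPlus σ ∨ suConj suOmegaMinus σ) := by
  obtain ⟨a, b, hab⟩ := exists_not_commute_SU2
  have ha : a ≠ 1 := by
    rintro rfl
    exact hab (.one_left b)
  unfold suTau suOmegaPlus suOmegaMinus
  simp only [suConj_prod_id_iff]
  refine ⟨fun _ => rfl, fun _ => rfl, fun _ => rfl, ?_, ?_, ?_, fun σ hσ => ?_⟩
  · rintro ⟨n, hn⟩
    exact ha (by simpa using DFunLike.congr_fun hn (a, 1))
  · rintro ⟨n, hn⟩
    exact ha (by simpa using DFunLike.congr_fun hn (1, a))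
  · rintro ⟨n, hn⟩
    exact ha (by simpa using DFunLike.congr_fun hn (1, a))
  · obtain ⟨f, rfl⟩ : ∃ f : SU2 × SU2 →* SU2, σ = f.prod (.id _) :=
      ⟨(MonoidHom.fst _ _).comp σ, MonoidHom.ext fun q => Prod.ext rfl (hσ q)⟩
    simp only [suConj_prod_id_iff]
    have hf := hasOnlyTrivialOrInnerEnd_SU2.prod_eq_one_or_eq_conj_comp_fst_or_snd ⟨a, b, hab⟩ f
    exact hf.imp_left fun h => ⟨1, by simp [h]⟩

/-- **The three conjugacy classes of splittings of
`1 → SU(2) → SU(2) × (SU(2) × SU(2)) → SU(2) × SU(2) → 1`.**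
`τ`, `ω₊`, `ω₋` are splittings, they are pairwise non-conjugate, and every continuous
splitting is conjugate to one of them. -/
theorem su2_sequence_has_three_conjugacy_classes_of_splittings :
    (∀ q, suProj (suTau q) = q) ∧
    (∀ q, suProj (suOmegaPlus q) = q) ∧
    (∀ q, suProj (suOmegaMinus q) = q) ∧
    ¬ suConj suTau suOmegaPlus ∧ ¬ suConj suTau suOmegaMinus ∧
    ¬ suConj suOmegaPlus suOmegaMinus ∧
    (∀ σ : (SU2 × SU2) →* (SU2 × SU2 × SU2), Continuous σ →
      (∀ q, suProj (σ q) = q) →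
      suConj suTau σ ∨ suConj suOmegaPlus σ ∨ suConj suOmegaMinus σ) := by
  obtain ⟨hτ, hp, hm, hτp, hτm, hpm, h⟩ :=
    su2_sequence_has_three_conjugacy_classes_of_splittings_general
  exact ⟨hτ, hp, hm, hτp, hτm, hpm, fun σ _ => h σ⟩
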